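/- Let n ≥ 2 be an even integer, F = GaloisField 2 n, f : F → F the Field Inverse Function f(x) = x^(2^n − 2), and A : F → F an affine map. Then, as real numbers, |{x ∈ F : f(x) = A(x)}| ≤ √(2^(n+1)) + 3/2. -/

import Mathlib

/-!
In characteristic two the hyperbola `a * b = 1` is a Sidon set: the sums `s = a₁ + a₂` and
`t = b₁ + b₂` determine the product `a₁ * a₂` through `a₁ * a₂ * t = s`, hence the pair
`{a₁, a₂}`. Away from `0`, the points where inversion agrees with an affine map `A` form the
preimage of this Sidon set under the injective affine map `x ↦ (x, A x)`, so they form a Sidon set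
too. A Sidon set with `m` elements has `m.choose 2` distinct nonzero sums of pairs, so
`m.choose 2 < q` in a field with `q` elements, which gives `m ≤ √(2 * q) + 1 / 2`; the point `0`
adds at most one more.
-/

theorem ncard_sym2_sdiff_diagSet {α : Type*} (S : Set α) :
    (S.sym2 \ Sym2.diagSet).ncard = S.ncard.choose 2 := by
  have himage :
      S.sym2 \ Sym2.diagSet = Sym2.map Subtype.val '' (Sym2.diagSetᶜ : Set (Sym2 S)) := by
    ext ⟨x, y⟩
    constructor
    · rintro ⟨⟨hx, hy⟩, hxy⟩
      exact ⟨s(⟨x, hx⟩, ⟨y, hy⟩), by simpa using hxy, rfl⟩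
    · rintro ⟨⟨z, w⟩, hzw, hmap⟩
      rw [← hmap]
      exact ⟨⟨z.2, w.2⟩, by simpa [Subtype.ext_iff] using hzw⟩
  rw [himage, Set.ncard_image_of_injective _ (Sym2.map.injective Subtype.val_injective),
    Sym2.ncard_diagSet_compl, Nat.card_coe_set_eq]

/-- Sidon sets, in the sense used for elementary abelian 2-groups: the sum of two distinct elements
of `S` determines them up to order among all pairs of elements of `S`. The sums `x + x` are left out
because they all vanish in such a group. -/
def IsSidon {G : Type*} [Add G] (S : Set G) : Prop :=
  ∀ ⦃x y z w : G⦄, x ∈ S → y ∈ S → z ∈ S → w ∈ S → x ≠ y → x + y = z + w → s(x, y) = s(z, w)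

namespace IsSidon

theorem injOn_add {G : Type*} [AddCommMagma G] {S : Set G} (hS : IsSidon S) :
    Set.InjOn Sym2.add (S.sym2 \ Sym2.diagSet) := by
  rintro ⟨x, y⟩ ⟨⟨hx, hy⟩, hxy⟩ ⟨z, w⟩ ⟨⟨hz, hw⟩, -⟩ hadd
  exact hS hx hy hz hw hxy hadd

theorem preimage_affine {G H : Type*} [AddCommMonoid G] [AddCommMonoid H] {S : Set H}
    (hS : IsSidon S) {φ : G →+ H} {c : H} (hφ : Function.Injective fun x ↦ φ x + c) :
    IsSidon {x | φ x + c ∈ S} := by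
  intro x y z w hx hy hz hw hxy hadd
  refine Sym2.map.injective hφ (hS hx hy hz hw (hφ.ne hxy) ?_)
  calc (φ x + c) + (φ y + c) = φ (x + y) + (c + c) := by rw [map_add, add_add_add_comm]
    _ = φ (z + w) + (c + c) := by rw [hadd]
    _ = (φ z + c) + (φ w + c) := by rw [map_add, add_add_add_comm]

variable {G : Type*} [AddCommGroup G] [Module (ZMod 2) G] [Finite G] {S : Set G}

theorem choose_two_ncard_lt_natCard (hS : IsSidon S) : S.ncard.choose 2 < Nat.card G := by
  rw [← ncard_sym2_sdiff_diagSet, ← hS.injOn_add.ncard_image]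
  refine Set.ncard_lt_card fun huniv ↦ ?_
  obtain ⟨⟨x, y⟩, ⟨-, hxy⟩, hadd⟩ := huniv.ge (Set.mem_univ (0 : G))
  have hsub : x - y = 0 := (ZModModule.sub_eq_add x y).trans hadd
  exact hxy (sub_eq_zero.mp hsub)

theorem ncard_le_sqrt (hS : IsSidon S) : (S.ncard : ℝ) ≤ √(2 * Nat.card G) + 1 / 2 := by
  have hchoose : (S.ncard.choose 2 : ℝ) + 1 ≤ Nat.card G := by
    exact_mod_cast hS.choose_two_ncard_lt_natCard
  rw [Nat.cast_choose_two] at hchoose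
  rw [← sub_le_iff_le_add]
  exact Real.le_sqrt_of_sq_le (by linarith)

end IsSidon

theorem sym2_eq_of_add_eq_of_mul_eq {R : Type*} [CommRing R] [NoZeroDivisors R] {x y z w : R}
    (hadd : x + y = z + w) (hmul : x * y = z * w) : s(x, y) = s(z, w) := by
  have hroot : (x - z) * (x - w) = 0 := by linear_combination x * hadd - hmul
  rw [Sym2.eq_iff]
  rcases mul_eq_zero.mp hroot with h | h
  · exact .inl ⟨sub_eq_zero.mp h, by linear_combination hadd - h⟩
  · exact .inr ⟨sub_eq_zero.mp h, by linear_combination hadd - h⟩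

theorem isSidon_hyperbola (R : Type*) [CommRing R] [NoZeroDivisors R] [CharP R 2] :
    IsSidon {p : R × R | p.1 * p.2 = 1} := by
  have hfst : Set.InjOn Prod.fst {p : R × R | p.1 * p.2 = 1} := by
    rintro ⟨a, b⟩ hb ⟨_, b'⟩ hb' rfl
    exact Prod.ext rfl (left_inv_eq_right_inv ((mul_comm b a).trans hb) hb')
  rintro ⟨a₁, b₁⟩ ⟨a₂, b₂⟩ ⟨a₃, b₃⟩ ⟨a₄, b₄⟩ h₁ h₂ h₃ h₄ hne hadd
  obtain ⟨ha, hb⟩ : a₁ + a₂ = a₃ + a₄ ∧ b₁ + b₂ = b₃ + b₄ := Prod.ext_iff.mp hadd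
  have hsum : a₁ + a₂ ≠ 0 := fun h ↦ hne (hfst h₁ h₂ (CharTwo.add_eq_zero.mp h))
  have hmul₁₂ : a₁ * a₂ * (b₁ + b₂) = a₁ + a₂ := by
    linear_combination a₂ * h₁.out + a₁ * h₂.out
  have hmul₃₄ : a₃ * a₄ * (b₁ + b₂) = a₁ + a₂ := by
    linear_combination a₃ * a₄ * hb + a₄ * h₃.out + a₃ * h₄.out - ha
  have hmul : a₁ * a₂ = a₃ * a₄ :=
    mul_right_cancel₀ (right_ne_zero_of_mul (hmul₁₂.trans_ne hsum)) (hmul₁₂.trans hmul₃₄.symm)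
  rcases Sym2.eq_iff.mp (sym2_eq_of_add_eq_of_mul_eq ha hmul) with ⟨h₁₃, h₂₄⟩ | ⟨h₁₄, h₂₃⟩
  · exact Sym2.eq_iff.mpr (.inl ⟨hfst h₁ h₃ h₁₃, hfst h₂ h₄ h₂₄⟩)
  · exact Sym2.eq_iff.mpr (.inr ⟨hfst h₁ h₄ h₁₄, hfst h₂ h₃ h₂₃⟩)

theorem isSidon_setOf_mul_affine_eq_one {R : Type*} [CommRing R] [NoZeroDivisors R] [CharP R 2]
    (L : R →+ R) (c : R) : IsSidon {x | x * (L x + c) = 1} := by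
  have hinj : Function.Injective fun x ↦ (AddMonoidHom.id R).prod L x + (0, c) :=
    fun x y hxy ↦ by simpa using congrArg Prod.fst hxy
  simpa using (isSidon_hyperbola R).preimage_affine hinj

theorem pow_natCard_sub_two {K : Type*} [GroupWithZero K] (hK : 2 < Nat.card K) (x : K) :
    x ^ (Nat.card K - 2) = x⁻¹ := by
  have : Finite K := Nat.finite_of_card_ne_zero (by omega)
  have := Fintype.ofFinite K
  rcases eq_or_ne x 0 with rfl | hx
  · rw [inv_zero, zero_pow (by omega)]
  · refine eq_inv_of_mul_eq_one_left ?_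
    rw [← pow_succ, show Nat.card K - 2 + 1 = Nat.card K - 1 by omega, Nat.card_eq_fintype_card,
      FiniteField.pow_card_sub_one_eq_one x hx]

theorem inverse_function_affine_agreement_bound_general {F : Type*} [Field F] [Finite F]
    [CharP F 2] (L : F →+ F) (c : F) :
    ({x | x⁻¹ = L x + c}.ncard : ℝ) ≤ √(2 * Nat.card F) + 3 / 2 := by
  let _ : Algebra (ZMod 2) F := ZMod.algebra F 2
  have hsubset : {x | x⁻¹ = L x + c} ⊆ insert 0 {x | x * (L x + c) = 1} := fun x hx ↦
    (eq_or_ne x 0).imp_right fun hx₀ ↦ (congrArg (x * ·) hx).symm.trans (mul_inv_cancel₀ hx₀)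
  have hncard : {x | x⁻¹ = L x + c}.ncard ≤ {x | x * (L x + c) = 1}.ncard + 1 :=
    (Set.ncard_le_ncard hsubset).trans (Set.ncard_insert_le _ _)
  have hcast : ({x | x⁻¹ = L x + c}.ncard : ℝ) ≤ {x | x * (L x + c) = 1}.ncard + 1 := by
    exact_mod_cast hncard
  linarith [(isSidon_setOf_mul_affine_eq_one L c).ncard_le_sqrt]

theorem inverse_function_affine_agreement_bound
    (n : ℕ) (hn : 2 ≤ n) (hne : Even n)
    (f A : GaloisField 2 n → GaloisField 2 n)
    (hf : ∀ x, f x = x ^ (2 ^ n - 2))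
    (L : GaloisField 2 n →ₗ[ZMod 2] GaloisField 2 n) (c : GaloisField 2 n)
    (hA : ∀ x, A x = L x + c) :
    ({x : GaloisField 2 n | f x = A x}.ncard : ℝ) ≤ Real.sqrt (2 ^ (n + 1)) + 3 / 2 := by
  have hcard : Nat.card (GaloisField 2 n) = 2 ^ n := GaloisField.card 2 n (by omega)
  have htwo_lt : 2 < Nat.card (GaloisField 2 n) := hcard ▸ lt_self_pow₀ one_lt_two hn
  have hinv (x) : f x = x⁻¹ := by rw [hf, ← hcard, pow_natCard_sub_two htwo_lt]
  simpa [hinv, hA, hcard, pow_succ'] using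
    inverse_function_affine_agreement_bound_general L.toAddMonoidHom c
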